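/- arXiv:1205.0327 — 3 statements merged into one kernel-verified Lean document; each statement's English description precedes it below -/
import Mathlib

section
/- If G is a uniquely dimensional finite connected simple graph of order n and diameter d, then β(G) ≤ n − d − 2. -/
open SimpleGraph

/-- `W` is a resolving set for `G`: any two distinct vertices are distinguished
by their distance to some vertex of `W`. -/
def IsResolvingSet {V : Type*} (G : SimpleGraph V) (W : Finset V) : Prop :=
  ∀ u v : V, u ≠ v → ∃ w ∈ W, G.dist u w ≠ G.dist v w

/-- The metric dimension of `G`: the minimum cardinality of a resolving set. -/
noncomputable def metricDim {V : Type*} (G : SimpleGraph V) : ℕ :=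
  sInf {k | ∃ W : Finset V, IsResolvingSet G W ∧ W.card = k}

/-- `B` is a metric basis: a resolving set of minimum cardinality. -/
def IsMetricBasis {V : Type*} (G : SimpleGraph V) (B : Finset V) : Prop :=
  IsResolvingSet G B ∧ B.card = metricDim G

/-- `G` is uniquely dimensional: it has exactly one metric basis. -/
def UniquelyDimensional {V : Type*} (G : SimpleGraph V) : Prop :=
  ∃! B : Finset V, IsMetricBasis G B

/-- `G` is uniquely `k`-dimensional: a unique metric basis and metric dimension `k`. -/
def UniquelyKDimensional {V : Type*} (G : SimpleGraph V) (k : ℕ) : Prop :=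
  UniquelyDimensional G ∧ metricDim G = k

namespace SimpleGraph

variable {V : Type*} {G : SimpleGraph V}

/-- Two vertices are resolved by some vertex different from both; otherwise they are twins. -/
def OutsideResolved (G : SimpleGraph V) (x y : V) : Prop :=
  ∃ w, w ≠ x ∧ w ≠ y ∧ G.dist x w ≠ G.dist y w

theorem Connected.exists_dist_add_dist_eq (hG : G.Connected) {a b : V} {t : ℕ}
    (ht : t ≤ G.dist a b) : ∃ z, G.dist a z = t ∧ G.dist a z + G.dist z b = G.dist a b := by
  obtain ⟨p, hp⟩ := hG.exists_walk_length_eq_dist a b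
  have h1 := dist_le (p.take t)
  have h2 := dist_le (p.drop t)
  have h3 := hG.dist_triangle (u := a) (v := p.getVert t) (w := b)
  rw [Walk.take_length] at h1
  rw [Walk.drop_length] at h2
  exact ⟨p.getVert t, by omega, by omega⟩

/-- A geodesic between two distance layers of `c` meets every intermediate layer. -/
theorem Connected.exists_mem_layer_between (hG : G.Connected) (c : V) {a b : V} {k : ℕ}
    (ha : G.dist c a ≤ k) (hb : k ≤ G.dist c b) :
    ∃ z, G.dist c z = k ∧ G.dist a z + G.dist z b = G.dist a b := by
  induction hn : G.dist a b generalizing a with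
  | zero =>
    obtain rfl := hG.dist_eq_zero_iff.1 hn
    exact ⟨a, by omega, by simp⟩
  | succ n ih =>
    rcases ha.eq_or_lt with h | h
    · exact ⟨a, h, by simp [hn]⟩
    · obtain ⟨a', h1, h2⟩ := hG.exists_dist_add_dist_eq (a := a) (b := b) (t := 1) (by omega)
      have h3 := hG.dist_triangle (u := c) (v := a) (w := a')
      obtain ⟨z, hz, hz'⟩ := ih (a := a') (by omega) (by omega)
      have h4 := hG.dist_triangle (u := a) (v := a') (w := z)
      have h5 := hG.dist_triangle (u := a) (v := z) (w := b)
      exact ⟨z, hz, by omega⟩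

/-- `r` picks a vertex from each distance layer `0, …, d` of `c`. -/
def IsLayerSection (G : SimpleGraph V) (c : V) (d : ℕ) (r : ℕ → V) : Prop :=
  ∀ j ≤ d, G.dist c (r j) = j

theorem IsLayerSection.update {c : V} {d : ℕ} {r : ℕ → V} (hr : IsLayerSection G c d r) (y : V) :
    IsLayerSection G c d (Function.update r (G.dist c y) y) := by
  intro j hj
  by_cases h : j = G.dist c y
  · subst h; simp
  · simpa [Function.update_of_ne h] using hr j hj

theorem Connected.exists_isLayerSection (hG : G.Connected) (c b : V) :
    ∃ r, IsLayerSection G c (G.dist c b) r := by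
  have h : ∀ j, ∃ z, j ≤ G.dist c b → G.dist c z = j := fun j ↦ by
    by_cases hj : j ≤ G.dist c b
    · obtain ⟨z, hz, -⟩ := hG.exists_dist_add_dist_eq hj
      exact ⟨z, fun _ ↦ hz⟩
    · exact ⟨c, fun h ↦ absurd h hj⟩
  choose r hr using h
  exact ⟨r, hr⟩

section Fintype

variable [DecidableEq V]

theorem IsLayerSection.card_image {c : V} {d : ℕ} {r : ℕ → V} (hr : IsLayerSection G c d r) :
    ((Finset.Icc 1 d).image r).card = d := by
  rw [Finset.card_image_of_injOn, Nat.card_Icc, Nat.add_sub_cancel]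
  intro i hi j hj hij
  simp only [Finset.coe_Icc, Set.mem_Icc] at hi hj
  rw [← hr i hi.2, ← hr j hj.2, hij]

theorem IsLayerSection.mem_image {c : V} {d : ℕ} {r : ℕ → V} (hr : IsLayerSection G c d r) {u : V}
    (hu : u ∈ (Finset.Icc 1 d).image r) : 1 ≤ G.dist c u ∧ u = r (G.dist c u) := by
  obtain ⟨j, hj, rfl⟩ := Finset.mem_image.1 hu
  rw [Finset.mem_Icc] at hj
  rw [hr j hj.2]
  exact ⟨hj.1, rfl⟩

variable [Fintype V]

theorem isResolvingSet_compl_of_layer (hG : G.Connected) {c : V} {S : Finset V} (hc : c ∉ S)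
    (hS : ∀ u ∈ S, ∀ v ∈ S, u ≠ v → G.dist c u = G.dist c v →
      ∃ w ∉ S, G.dist u w ≠ G.dist v w) : IsResolvingSet G Sᶜ := by
  intro u v huv
  by_cases h : G.dist c u = G.dist c v
  · by_cases hu : u ∈ S
    · by_cases hv : v ∈ S
      · obtain ⟨w, hw, hw'⟩ := hS u hu v hv huv h
        exact ⟨w, by simpa using hw, hw'⟩
      · refine ⟨v, by simpa using hv, ?_⟩
        have := hG.pos_dist_of_ne huv
        rw [dist_self]; omega
    · refine ⟨u, by simpa using hu, ?_⟩
      have := hG.pos_dist_of_ne huv.symm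
      rw [dist_self]; omega
  · exact ⟨c, by simpa using hc, by rwa [dist_comm, dist_comm (u := v)]⟩

theorem IsLayerSection.isResolvingSet_compl (hG : G.Connected) {c : V} {d : ℕ} {r : ℕ → V}
    (hr : IsLayerSection G c d r) : IsResolvingSet G ((Finset.Icc 1 d).image r)ᶜ := by
  refine isResolvingSet_compl_of_layer (c := c) hG (fun h ↦ ?_) fun u hu v hv huv h ↦ ?_
  · simpa using (hr.mem_image h).1
  · exact absurd ((hr.mem_image hu).2.trans (h ▸ (hr.mem_image hv).2.symm)) huv

/-- `T` is the only set of `d + 1` vertices whose complement is resolving, in a connected graph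
of diameter at most `d` in which `c` has eccentricity `d`. -/
structure IsUniqueCoresolving (G : SimpleGraph V) (c : V) (d : ℕ) (T : Finset V) : Prop where
  connected : G.Connected
  exists_section : ∃ r, IsLayerSection G c d r
  dist_le : ∀ x y, G.dist x y ≤ d
  card : T.card = d + 1
  resolving : IsResolvingSet G Tᶜ
  unique : ∀ S : Finset V, S.card = d + 1 → IsResolvingSet G Sᶜ → S = T

namespace IsUniqueCoresolving

variable {c : V} {d : ℕ} {T : Finset V}

theorem eq_insert (h : IsUniqueCoresolving G c d T) {r : ℕ → V} (hr : IsLayerSection G c d r)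
    {x y w : V} (hxy : x ≠ y) (hl : G.dist c x = G.dist c y) (hry : r (G.dist c y) = y)
    (hwx : w ≠ x) (hw : r (G.dist c w) ≠ w) (hxw : G.dist x w ≠ G.dist y w) :
    insert x ((Finset.Icc 1 d).image r) = T := by
  have hx : x ∉ (Finset.Icc 1 d).image r := fun hx ↦
    hxy ((hr.mem_image hx).2.trans (by rw [hl, hry]))
  have hwT : w ∉ insert x ((Finset.Icc 1 d).image r) := by
    rw [Finset.mem_insert, not_or]
    exact ⟨hwx, fun h ↦ hw (hr.mem_image h).2.symm⟩
  refine h.unique _ (by rw [Finset.card_insert_of_notMem hx, hr.card_image])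
    (isResolvingSet_compl_of_layer (c := c) h.connected ?_ ?_)
  · rw [Finset.mem_insert, not_or]
    refine ⟨?_, fun h ↦ by simpa using (hr.mem_image h).1⟩
    rintro rfl
    rw [dist_self] at hl
    exact hxy (h.connected.dist_eq_zero_iff.1 hl.symm)
  · intro u hu v hv huv huvl
    rw [Finset.mem_insert] at hu hv
    rcases hu with rfl | hu <;> rcases hv with rfl | hv
    · exact absurd rfl huv
    · have : v = y := (hr.mem_image hv).2.trans (by rw [← huvl, hl, hry])
      subst this
      exact ⟨w, hwT, hxw⟩
    · have : u = y := (hr.mem_image hu).2.trans (by rw [huvl, hl, hry])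
      subst this
      exact ⟨w, hwT, hxw.symm⟩
    · exact absurd ((hr.mem_image hu).2.trans (huvl ▸ (hr.mem_image hv).2.symm)) huv

theorem pos_layer (h : IsUniqueCoresolving G c d T) {x y : V} (hxy : x ≠ y)
    (hl : G.dist c x = G.dist c y) : 1 ≤ G.dist c y := by
  by_contra h0
  have hy : G.dist c y = 0 := by omega
  exact hxy ((h.connected.dist_eq_zero_iff.1 (hl.trans hy)).symm.trans
    (h.connected.dist_eq_zero_iff.1 hy))

/-- A vertex of the same layer never resolves two vertices of that layer. -/
theorem dist_eq_of_same_layer (h : IsUniqueCoresolving G c d T) {x y w : V}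
    (hl : G.dist c x = G.dist c y) (hwx : w ≠ x) (hwy : w ≠ y) (hlw : G.dist c w = G.dist c y) :
    G.dist x w = G.dist y w := by
  obtain ⟨r, hr⟩ := h.exists_section
  have key : ∀ {a b e : V}, a ≠ b → e ≠ a → e ≠ b → G.dist c a = G.dist c b →
      G.dist c e = G.dist c b → G.dist a e ≠ G.dist b e → a ∈ T ∧ b ∈ T ∧ e ∉ T := by
    intro a b e hab hea heb hlab hle hne
    have hr' := hr.update b
    rw [← h.eq_insert hr' hab hlab (by simp) hea (by simp [hle, heb.symm]) hne]
    refine ⟨by simp, Finset.mem_insert_of_mem (Finset.mem_image.2 ⟨G.dist c b, ?_, by simp⟩), ?_⟩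
    · exact Finset.mem_Icc.2 ⟨h.pos_layer hab hlab, h.dist_le _ _⟩
    · rw [Finset.mem_insert, not_or]
      refine ⟨hea, fun he ↦ heb ?_⟩
      rw [(hr'.mem_image he).2, hle]; simp
  by_contra hne
  have hxy : x ≠ y := by rintro rfl; exact hne rfl
  have h1 := (key hxy hwx hwy hl hlw hne).2.2
  by_cases h2 : G.dist x y = G.dist w y
  · have h3 : G.dist y x ≠ G.dist w x := by
      rw [dist_comm, dist_comm (u := w), h2, dist_comm (u := w)]; exact Ne.symm hne
    exact h1 (key hwy.symm hxy hwx.symm hlw.symm (hl.trans hlw.symm) h3).2.1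
  · exact h1 (key hwx.symm hxy.symm hwy.symm (hl.trans hlw.symm) hlw.symm h2).2.1

/-- Two vertices of the same layer can only be resolved by a third vertex that is alone in its
layer. -/
theorem layer_singleton_of_resolves (h : IsUniqueCoresolving G c d T) {x y w : V}
    (hl : G.dist c x = G.dist c y) (hwx : w ≠ x) (hwy : w ≠ y) (hxw : G.dist x w ≠ G.dist y w)
    {w' : V} (hw' : G.dist c w' = G.dist c w) : w' = w := by
  by_contra hne
  obtain ⟨r, hr⟩ := h.exists_section
  have hij : G.dist c w ≠ G.dist c y := fun e ↦ hxw (h.dist_eq_of_same_layer hl hwx hwy e)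
  have hxy : x ≠ y := by rintro rfl; exact hxw rfl
  have key : ∀ {a b e e' : V}, a ≠ b → e ≠ a → e' ≠ e → G.dist c a = G.dist c b →
      G.dist c e' = G.dist c e → G.dist c e ≠ G.dist c b → G.dist a e ≠ G.dist b e →
      a ∈ T ∧ e ∉ T := by
    intro a b e e' hab hea hee hlab hle hlne hd
    have hr' := (hr.update b).update e'
    have hre : Function.update (Function.update r (G.dist c b) b) (G.dist c e') e' (G.dist c e) ≠
        e := by
      rw [hle]; simpa using hee
    rw [← h.eq_insert hr' hab hlab (by rw [Function.update_of_ne (by omega)]; simp) hea hre hd]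
    refine ⟨by simp, ?_⟩
    rw [Finset.mem_insert, not_or]
    exact ⟨hea, fun he ↦ hre (hr'.mem_image he).2.symm⟩
  have h1 := (key hxy hwx hne hl hw' hij hxw).2
  by_cases h2 : G.dist w x = G.dist w' x
  · by_cases h3 : G.dist w y = G.dist w' y
    · have h4 : G.dist x w' ≠ G.dist y w' := by
        rw [dist_comm, ← h2, dist_comm (u := y), ← h3, dist_comm, dist_comm (u := w)]
        exact hxw
      have hwx' : w' ≠ x := by rintro rfl; omega
      have hwy' : w' ≠ y := by rintro rfl; omega
      have hr' := (hr.update y).update w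
      rw [← h.eq_insert hr' hxy hl (by rw [Function.update_of_ne (by omega)]; simp) hwx'
        (by rw [hw']; simpa using Ne.symm hne) h4] at h1
      refine h1 (Finset.mem_insert_of_mem (Finset.mem_image.2 ⟨G.dist c w, ?_, by simp⟩))
      exact Finset.mem_Icc.2 ⟨h.pos_layer hne hw', h.dist_le _ _⟩
    · exact h1 (key (Ne.symm hne) hwy.symm hxy hw'.symm hl (by omega) h3).1
  · exact h1 (key (Ne.symm hne) hwx.symm hxy.symm hw'.symm hl.symm (by omega) h2).1

theorem layer_lt_of_resolves (h : IsUniqueCoresolving G c d T) {x y w : V}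
    (hl : G.dist c x = G.dist c y) (hwx : w ≠ x) (hwy : w ≠ y) (hxw : G.dist x w ≠ G.dist y w) :
    G.dist c x < G.dist c w := by
  by_contra hlt
  have key : ∀ u, G.dist c x = G.dist c u → G.dist c w + G.dist w u = G.dist c x := by
    intro u hu
    obtain ⟨z, hz, hz'⟩ := h.connected.exists_mem_layer_between c (a := c) (b := u)
      (k := G.dist c w) (by simp) (by omega)
    obtain rfl := h.layer_singleton_of_resolves hl hwx hwy hxw hz
    omega
  have h1 := key x rfl
  have h2 := key y hl
  rw [dist_comm, dist_comm (u := y)] at hxw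
  omega

/-- Above a layer containing two non-twins, all layers are singletons. -/
theorem layer_singleton_of_lt (h : IsUniqueCoresolving G c d T) {x y u v : V}
    (hl : G.dist c x = G.dist c y) (hxy : OutsideResolved G x y)
    (hu : G.dist c x < G.dist c u) (huv : G.dist c u = G.dist c v) : u = v := by
  obtain ⟨w, hwx, hwy, hxw⟩ := hxy
  have hlw := h.layer_lt_of_resolves hl hwx hwy hxw
  by_contra hne
  have huni : ∀ z, G.dist c z = G.dist c u → G.dist x z = G.dist y z := by
    intro z hz
    by_contra hz'
    have hzx : z ≠ x := by rintro rfl; omega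
    have hzy : z ≠ y := by rintro rfl; omega
    have h1 := h.layer_singleton_of_resolves hl hzx hzy hz' (w' := u) hz.symm
    have h2 := h.layer_singleton_of_resolves hl hzx hzy hz' (w' := v) (by omega)
    exact hne (h1.trans h2.symm)
  rcases le_or_gt (G.dist c u) (G.dist c w) with hle | hgt
  · obtain ⟨z, hz, hz'⟩ := h.connected.exists_mem_layer_between c hu.le hle
    obtain ⟨z₂, hz₂, hz₂'⟩ := h.connected.exists_mem_layer_between c (hl ▸ hu.le) hle
    have h1 := huni z hz
    have h2 := huni z₂ hz₂
    have h3 := h.connected.dist_triangle (u := x) (v := z₂) (w := w)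
    have h4 := h.connected.dist_triangle (u := y) (v := z) (w := w)
    omega
  · obtain ⟨z, hz, hz'⟩ := h.connected.exists_mem_layer_between c hlw.le hgt.le
    obtain ⟨z₂, hz₂, hz₂'⟩ := h.connected.exists_mem_layer_between c (hl ▸ hlw.le) hgt.le
    rw [h.layer_singleton_of_resolves hl hwx hwy hxw hz] at hz'
    rw [h.layer_singleton_of_resolves hl hwx hwy hxw hz₂] at hz₂'
    have := huni u rfl
    omega

/-- Among three vertices of a layer, two are twins. -/
theorem not_outsideResolved_of_layer (h : IsUniqueCoresolving G c d T) {x y u : V}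
    (hy : G.dist c x = G.dist c y) (hu : G.dist c x = G.dist c u)
    (hxy : OutsideResolved G x y) (hxu : OutsideResolved G x u) : ¬ OutsideResolved G y u := by
  intro hyu
  obtain ⟨w, hwx, hwy, hxw⟩ := id hxy
  have hlw := h.layer_lt_of_resolves hy hwx hwy hxw
  obtain ⟨z, hz, -⟩ := h.connected.exists_mem_layer_between c (a := x) (b := w)
    (k := G.dist c x + 1) (by omega) (by omega)
  have hzuniq : ∀ z', G.dist c z' = G.dist c x + 1 → z' = z := fun z' hz' ↦
    h.layer_singleton_of_lt hy hxy (by omega) (by omega)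
  have through : ∀ {a e}, G.dist c a = G.dist c x → G.dist c x < G.dist c e →
      G.dist a z + G.dist z e = G.dist a e := by
    intro a e ha he
    obtain ⟨z', hz', h'⟩ := h.connected.exists_mem_layer_between c (a := a) (b := e)
      (k := G.dist c x + 1) (by omega) (by omega)
    rwa [hzuniq z' hz'] at h'
  have hne : ∀ {a b}, G.dist c a = G.dist c x → G.dist c b = G.dist c x →
      OutsideResolved G a b → G.dist a z ≠ G.dist b z := by
    rintro a b ha hb ⟨e, hea, heb, he⟩ heq
    have hle := h.layer_lt_of_resolves (ha.trans hb.symm) hea heb he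
    have h1 := through ha (by omega : G.dist c x < G.dist c e)
    have h2 := through hb (by omega : G.dist c x < G.dist c e)
    omega
  have hle : ∀ {a b}, G.dist c a = G.dist c x → G.dist c b = G.dist c x →
      2 ≤ G.dist a z → 2 ≤ G.dist b z → G.dist b z ≤ G.dist a z := by
    intro a b ha hb ha2 hb2
    obtain ⟨q, hq, hq'⟩ := h.connected.exists_dist_add_dist_eq (a := a) (b := z)
      (t := G.dist a z - 1) (by omega)
    have hqa : q ≠ a := by rintro rfl; rw [dist_self] at hq; omega
    have hqb : q ≠ b := by rintro rfl; omega
    by_cases hd : G.dist a q = G.dist b q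
    · have := h.connected.dist_triangle (u := b) (v := q) (w := z)
      omega
    · have hlt := h.layer_lt_of_resolves (ha.trans hb.symm) hqa hqb hd
      have := through ha (ha ▸ hlt)
      omega
  have hpos : ∀ {a}, G.dist c a = G.dist c x → 0 < G.dist a z := fun {a} ha ↦
    h.connected.pos_dist_of_ne (by rintro rfl; omega)
  have n1 := hne rfl hy.symm hxy
  have n2 := hne rfl hu.symm hxu
  have n3 := hne hy.symm hu.symm hyu
  have p1 := hpos rfl
  have p2 := hpos hy.symm
  have p3 := hpos hu.symm
  have l1 := hle rfl hy.symm
  have l2 := hle hy.symm rfl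
  have l3 := hle rfl hu.symm
  have l4 := hle hu.symm rfl
  have l5 := hle hy.symm hu.symm
  have l6 := hle hu.symm hy.symm
  omega

/-- Twins do not belong to `T`. -/
theorem outsideResolved_of_mem (h : IsUniqueCoresolving G c d T) {x y : V} (hx : x ∈ T)
    (hxy : x ≠ y) : OutsideResolved G x y := by
  by_contra hn
  have htw : ∀ w, w ≠ x → w ≠ y → G.dist x w = G.dist y w := fun w h1 h2 ↦ by
    by_contra h3
    exact hn ⟨w, h1, h2, h3⟩
  have hB : ∀ u v, u ≠ v → ∃ w ∉ T, G.dist u w ≠ G.dist v w := by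
    simpa [IsResolvingSet] using h.resolving
  have hpos := fun {a b : V} (hab : a ≠ b) ↦ h.connected.pos_dist_of_ne hab
  have hyT : y ∉ T := by
    obtain ⟨w, hw, hne⟩ := hB x y hxy
    by_contra hy
    exact hne (htw w (by rintro rfl; exact hw hx) (by rintro rfl; exact hw hy))
  have hres : IsResolvingSet G (insert y (T.erase x))ᶜ := by
    intro u v huv
    have hxm : x ∈ (insert y (T.erase x))ᶜ := by simp [hxy]
    have hmem : ∀ w ∉ T, w ≠ y → w ∈ (insert y (T.erase x))ᶜ := by
      intro w hw hwy
      simp [hwy, hw]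
    have haux : ∀ v, y ≠ v → ∃ w ∈ (insert y (T.erase x))ᶜ, G.dist y w ≠ G.dist v w := by
      intro v hyv
      by_cases hvx : v = x
      · subst hvx
        exact ⟨v, hxm, by simpa using (hpos hyv).ne'⟩
      by_cases hd : G.dist y x = G.dist v x
      · obtain ⟨w, hw, hne⟩ := hB x v (Ne.symm hvx)
        have hwx : w ≠ x := by rintro rfl; exact hw hx
        have hwy : w ≠ y := by
          rintro rfl
          have := htw v hvx (Ne.symm hyv)
          rw [dist_comm, hd, dist_comm, this, dist_comm] at hne
          exact hne rfl
        exact ⟨w, hmem w hw hwy, by rwa [← htw w hwx hwy]⟩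
      · exact ⟨x, hxm, hd⟩
    by_cases huy : u = y
    · subst huy; exact haux v huv
    by_cases hvy : v = y
    · subst hvy
      obtain ⟨w, hw, hne⟩ := haux u huv.symm
      exact ⟨w, hw, hne.symm⟩
    by_cases hux : u = x
    · subst hux
      exact ⟨u, hxm, by simpa using (hpos huv.symm).ne⟩
    by_cases hvx : v = x
    · subst hvx
      exact ⟨v, hxm, by simpa using (hpos huv).ne'⟩
    obtain ⟨w, hw, hne⟩ := hB u v huv
    by_cases hwy : w = y
    · subst hwy
      refine ⟨x, hxm, ?_⟩
      rwa [dist_comm, htw u hux huy, dist_comm (u := v), htw v hvx hvy, dist_comm,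
        dist_comm (u := w)]
    · exact ⟨w, hmem w hw hwy, hne⟩
  have hcard : (insert y (T.erase x)).card = d + 1 := by
    rw [Finset.card_insert_of_notMem (by simp [hyT]), Finset.card_erase_add_one hx, h.card]
  exact hyT (h.unique _ hcard hres ▸ Finset.mem_insert_self _ _)

/-- The vertices outside `T` are not pairwise twins. -/
theorem exists_outsideResolved_notMem (h : IsUniqueCoresolving G c d T) (hd : 1 ≤ d) :
    ∃ b ∉ T, ∃ b' ∉ T, b ≠ b' ∧ OutsideResolved G b b' := by
  have hB : ∀ u v, u ≠ v → ∃ w ∉ T, G.dist u w ≠ G.dist v w := by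
    simpa [IsResolvingSet] using h.resolving
  obtain ⟨p, -, q, -, hpq⟩ := Finset.one_lt_card.1 (by rw [h.card]; omega : 1 < T.card)
  obtain ⟨b, hb, -⟩ := hB p q hpq
  obtain ⟨u, hu, v, hv, huv, hbuv⟩ := Finset.exists_ne_map_eq_of_card_lt_of_maps_to
    (s := T) (t := Finset.Icc 1 d) (f := G.dist b) (by rw [h.card, Nat.card_Icc]; omega) (by
      intro u hu
      refine Finset.mem_coe.2 (Finset.mem_Icc.2 ⟨h.connected.pos_dist_of_ne ?_, h.dist_le _ _⟩)
      rintro rfl; exact hb hu)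
  obtain ⟨b', hb', hne⟩ := hB u v huv
  refine ⟨b, hb, b', hb', ?_, ?_⟩
  · rintro rfl
    rw [dist_comm, hbuv, dist_comm] at hne
    exact hne rfl
  · by_contra hn
    have key : ∀ u ∈ T, G.dist b u = G.dist b' u := fun u hu ↦ by
      by_contra h3
      exact hn ⟨u, by rintro rfl; exact hb hu, by rintro rfl; exact hb' hu, h3⟩
    rw [dist_comm, ← key u hu, dist_comm (u := v), ← key v hv] at hne
    exact hne hbuv

theorem eq_zero (h : IsUniqueCoresolving G c d T) : d = 0 := by
  by_contra hd
  obtain ⟨b, hb, b', hb', hbb, hres⟩ := h.exists_outsideResolved_notMem (by omega)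
  have hnt : ∀ {t e}, t ∈ T → e ∉ T → OutsideResolved G t e := fun ht he ↦
    h.outsideResolved_of_mem ht (by rintro rfl; exact he ht)
  have hmaps : ∀ S : Finset V, Set.MapsTo (G.dist c) S (Finset.range (d + 1)) := fun S u _ ↦ by
    simpa using Nat.lt_succ_of_le (h.dist_le c u)
  by_cases hinj : Set.InjOn (G.dist c) T
  · have hsurj : ∀ e, ∃ t ∈ T, G.dist c t = G.dist c e := fun e ↦
      Finset.surjOn_of_injOn_of_card_le _ (hmaps T) hinj (by simp [h.card])
        (hmaps {e} (by simp))
    have hle : ∀ {e e'}, e ∉ T → e' ∉ T → G.dist c e ≤ G.dist c e' := by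
      intro e e' he he'
      by_contra hlt
      obtain ⟨t, ht, htl⟩ := hsurj e
      obtain ⟨t', ht', htl'⟩ := hsurj e'
      have := h.layer_singleton_of_lt htl' (hnt ht' he') (u := t) (v := e) (by omega) htl
      exact he (this ▸ ht)
    obtain ⟨t, ht, htl⟩ := hsurj b
    have hbl : G.dist c b = G.dist c b' := le_antisymm (hle hb hb') (hle hb' hb)
    exact h.not_outsideResolved_of_layer htl (htl.trans hbl) (hnt ht hb) (hnt ht hb') hres
  · simp only [Set.InjOn, not_forall] at hinj
    obtain ⟨x, hx, y, hy, hl, hxy⟩ := hinj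
    rw [Finset.mem_coe] at hx hy
    have hxyr := h.outsideResolved_of_mem hx hxy
    have hlay : ∀ u, G.dist c u = G.dist c x → u = x ∨ u = y := by
      intro u hu
      by_contra! hne
      exact h.not_outsideResolved_of_layer hl hu.symm hxyr
        (h.outsideResolved_of_mem hx hne.1.symm) (h.outsideResolved_of_mem hy hne.2.symm)
    have hother : ∀ {t e}, t ∈ T → t ≠ e → G.dist c t = G.dist c e → G.dist c t = G.dist c x := by
      intro t e ht hte htl
      rcases lt_trichotomy (G.dist c t) (G.dist c x) with hlt | heq | hgt
      · exact absurd (h.layer_singleton_of_lt htl (h.outsideResolved_of_mem ht hte) hlt hl) hxy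
      · exact heq
      · exact absurd (h.layer_singleton_of_lt hl hxyr hgt htl) hte
    obtain ⟨w, hw, hxw⟩ := h.resolving x y hxy
    rw [Finset.mem_compl] at hw
    have hwx : w ≠ x := by rintro rfl; exact hw hx
    have hwy : w ≠ y := by rintro rfl; exact hw hy
    have hwuniq := fun u ↦ h.layer_singleton_of_resolves hl hwx hwy hxw (w' := u)
    have hinj' : Set.InjOn (G.dist c) (insert w (T.erase x) : Finset V) := by
      intro u hu v hv huv
      by_contra hne
      simp only [Finset.coe_insert, Finset.coe_erase, Set.mem_insert_iff, Set.mem_sdiff,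
        Finset.mem_coe, Set.mem_singleton_iff] at hu hv
      rcases hu with rfl | hu
      · exact hne (hwuniq v huv.symm).symm
      rcases hv with rfl | hv
      · exact hne (hwuniq u huv)
      have hux := hother hu.1 hne huv
      have h1 := (hlay u hux).resolve_left hu.2
      have h2 := (hlay v (huv ▸ hux)).resolve_left hv.2
      exact hne (h1.trans h2.symm)
    have hcard : (insert w (T.erase x)).card = d + 1 := by
      rw [Finset.card_insert_of_notMem (by simp [hw]), Finset.card_erase_add_one hx, h.card]
    have hall : ∀ e ∉ T, e = w := by
      intro e he
      obtain ⟨t, ht, htl⟩ := Finset.surjOn_of_injOn_of_card_le _ (hmaps _) hinj'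
        (by simp [hcard]) (hmaps {e} (by simp : e ∈ (({e} : Finset V) : Set V)))
      simp only [Finset.coe_insert, Finset.coe_erase, Set.mem_insert_iff, Set.mem_sdiff,
        Finset.mem_coe, Set.mem_singleton_iff] at ht
      rcases ht with rfl | ht
      · exact hwuniq e htl.symm
      · have hte : t ≠ e := by rintro rfl; exact he ht.1
        rcases hlay e (htl ▸ hother ht.1 hte htl) with rfl | rfl
        · exact absurd hx he
        · exact absurd hy he
    exact hbb ((hall b hb).trans (hall b' hb').symm)

end IsUniqueCoresolving

end Fintype

end SimpleGraph

theorem stmt4 {V : Type*} [Fintype V] (G : SimpleGraph V)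
    (hconn : G.Connected) (hud : UniquelyDimensional G) :
    metricDim G ≤ Fintype.card V - G.diam - 2 := by
  classical
  obtain ⟨B, ⟨hB, hBcard⟩, hBuniq⟩ := hud
  have hle : ∀ S : Finset V, IsResolvingSet G Sᶜ → metricDim G + S.card ≤ Fintype.card V := by
    intro S hS
    have h1 : metricDim G ≤ Sᶜ.card := Nat.sInf_le ⟨Sᶜ, hS, rfl⟩
    have h2 := S.card_add_card_compl
    omega
  have huniq : ∀ S : Finset V, IsResolvingSet G Sᶜ →
      metricDim G + S.card = Fintype.card V → S = Bᶜ := by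
    intro S hS hcard
    have h2 := S.card_add_card_compl
    rw [← hBuniq Sᶜ ⟨hS, by omega⟩, compl_compl]
  have hBc := B.card_add_card_compl
  have := hconn.nonempty
  have hediam := connected_iff_ediam_ne_top.1 hconn
  obtain ⟨a, b, hab⟩ := G.exists_dist_eq_diam
  obtain ⟨r, hr⟩ := hconn.exists_isLayerSection a b
  obtain ⟨r', hr'⟩ := hconn.exists_isLayerSection b a
  have hr'' := hr'.update a
  rw [dist_comm, hab] at hr''
  rw [hab] at hr
  have hres := hr.isResolvingSet_compl hconn
  have hres' := hr''.isResolvingSet_compl hconn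
  have h1 := hle _ hres
  rw [hr.card_image] at h1
  rcases Nat.eq_zero_or_pos G.diam with hd | hd
  · have hsub := (diam_eq_zero.1 hd).resolve_left hediam
    have := hle Finset.univ fun u v huv ↦ absurd (Subsingleton.elim u v) huv
    rw [Finset.card_univ] at this
    omega
  by_contra hlt
  have hne : metricDim G + G.diam ≠ Fintype.card V := by
    intro heq
    have e1 := huniq _ hres (by rw [hr.card_image, heq])
    have e2 := huniq _ hres' (by rw [hr''.card_image, heq])
    have ha : a ∈ (Finset.Icc 1 G.diam).image r := by
      rw [e1, ← e2]
      exact Finset.mem_image.2 ⟨G.diam, Finset.mem_Icc.2 ⟨hd, le_rfl⟩, by simp⟩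
    simpa using (hr.mem_image ha).1
  have hext : IsUniqueCoresolving G a G.diam Bᶜ :=
    { connected := hconn
      exists_section := ⟨r, hr⟩
      dist_le := fun _ _ ↦ dist_le_diam hediam
      card := by omega
      resolving := by rwa [compl_compl]
      unique := fun S hS hSr ↦ huniq S hSr (by omega) }
  exact hd.ne' hext.eq_zero
end

section
/- For every integer k ≥ 2, let n_0(k) denote the minimum order of a uniquely k-dimensional finite connected simple graph. Then 2k + 1 ≤ n_0(k) ≤ ⌈5k/2⌉ + 1; in particular, a uniquely k-dimensional graph of some order exists, every uniquely k-dimensional graph has order at least 2k+1, and a uniquely k-dimensional graph of order ⌈5k/2⌉ + 1 or smaller exists. -/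
open SimpleGraph

/-- Distinct vertices not distinguished by `W` lie outside `W`. -/
lemma notMem_of_dist_eq {V : Type*} {G : SimpleGraph V} (hG : G.Connected) {W : Finset V}
    {u v : V} (huv : u ≠ v) (h : ∀ w ∈ W, G.dist u w = G.dist v w) : u ∉ W ∧ v ∉ W := by
  constructor
  · intro hu
    have := h u hu
    rw [dist_self] at this
    exact huv ((hG.dist_eq_zero_iff.1 this.symm).symm)
  · intro hv
    have := h v hv
    rw [dist_self] at this
    exact huv (hG.dist_eq_zero_iff.1 this)

lemma metricDim_le_card {V : Type*} {G : SimpleGraph V} {W : Finset V}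
    (h : IsResolvingSet G W) : metricDim G ≤ W.card :=
  Nat.sInf_le ⟨W, h, rfl⟩

/-- Each vertex of a unique metric basis is the only basis vertex distinguishing some pair of
vertices outside the basis. -/
lemma exists_private_pair {V : Type*} {G : SimpleGraph V} (hG : G.Connected) {B : Finset V}
    (hB : IsMetricBasis G B) (huniq : ∀ W, IsMetricBasis G W → W = B) {b : V} (hb : b ∈ B) :
    ∃ u v : V, u ∉ B ∧ v ∉ B ∧ G.dist u b ≠ G.dist v b ∧
      ∀ w ∈ B, w ≠ b → G.dist u w = G.dist v w := by
  classical
  have hout : ∀ u v : V, u ≠ v → u ∉ B → v ∉ B → (∀ w ∈ B.erase b, G.dist u w = G.dist v w) →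
      ∃ u v : V, u ∉ B ∧ v ∉ B ∧ G.dist u b ≠ G.dist v b ∧
        ∀ w ∈ B, w ≠ b → G.dist u w = G.dist v w := by
    intro u v huv hu hv h
    refine ⟨u, v, hu, hv, ?_, fun w hw hwb => h w (Finset.mem_erase.2 ⟨hwb, hw⟩)⟩
    obtain ⟨w, hw, hne⟩ := hB.1 u v huv
    by_cases hwb : w = b
    · rwa [← hwb]
    · exact absurd (h w (Finset.mem_erase.2 ⟨hwb, hw⟩)) hne
  have hswap : ∀ x : V, x ∉ B → (∀ w ∈ B.erase b, G.dist b w = G.dist x w) →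
      ∃ u v : V, u ∉ B ∧ v ∉ B ∧ G.dist u b ≠ G.dist v b ∧
        ∀ w ∈ B, w ≠ b → G.dist u w = G.dist v w := by
    intro x hx h
    have hnot : ¬ IsResolvingSet G (insert x (B.erase b)) := by
      intro hres
      have hcard : (insert x (B.erase b)).card = B.card := by
        rw [Finset.card_insert_of_notMem (fun hmem => hx (Finset.mem_of_mem_erase hmem)),
          Finset.card_erase_add_one hb]
      have := huniq _ ⟨hres, hcard.trans hB.2⟩
      exact hx (this ▸ Finset.mem_insert_self _ _)
    simp only [IsResolvingSet, not_forall, not_exists, not_and, not_not] at hnot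
    obtain ⟨u, v, huv, heq⟩ := hnot
    obtain ⟨hu, hv⟩ := notMem_of_dist_eq hG huv heq
    have hu' := fun hne => mt (fun hmem => Finset.mem_insert_of_mem
      (Finset.mem_erase.2 ⟨hne, hmem⟩)) hu
    have hv' := fun hne => mt (fun hmem => Finset.mem_insert_of_mem
      (Finset.mem_erase.2 ⟨hne, hmem⟩)) hv
    have heq' : ∀ w ∈ B.erase b, G.dist u w = G.dist v w :=
      fun w hw => heq w (Finset.mem_insert_of_mem hw)
    have hux : u ≠ x := fun hxx => hu (hxx ▸ Finset.mem_insert_self _ _)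
    have hvx : v ≠ x := fun hxx => hv (hxx ▸ Finset.mem_insert_self _ _)
    by_cases hub : u = b
    · subst hub
      exact hout x v hvx.symm hx (hv' huv.symm) fun w hw => (h w hw).symm.trans (heq' w hw)
    · by_cases hvb : v = b
      · subst hvb
        exact hout x u hux.symm hx (hu' huv) fun w hw => (h w hw).symm.trans (heq' w hw).symm
      · exact hout u v huv (hu' hub) (hv' hvb) heq'
  have hnot : ¬ IsResolvingSet G (B.erase b) := by
    intro hres
    have h1 := metricDim_le_card hres
    have h2 := Finset.card_erase_lt_of_mem hb
    have h3 := hB.2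
    omega
  simp only [IsResolvingSet, not_forall, not_exists, not_and, not_not] at hnot
  obtain ⟨u, v, huv, heq⟩ := hnot
  obtain ⟨hu, hv⟩ := notMem_of_dist_eq hG huv heq
  by_cases hub : u = b
  · subst hub
    exact hswap v (fun hmem => hv (Finset.mem_erase.2 ⟨huv.symm, hmem⟩)) heq
  · by_cases hvb : v = b
    · subst hvb
      exact hswap u (fun hmem => hu (Finset.mem_erase.2 ⟨huv, hmem⟩)) fun w hw => (heq w hw).symm
    · exact hout u v huv (fun hmem => hu (Finset.mem_erase.2 ⟨hub, hmem⟩))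
        (fun hmem => hv (Finset.mem_erase.2 ⟨hvb, hmem⟩)) heq

/-- The constant function and the distance functions from the vertices of a unique metric basis
are linearly independent on the complement of the basis, which bounds the order from below. -/
lemma two_mul_add_one_le_card {V : Type*} [Fintype V] {G : SimpleGraph V} (hG : G.Connected)
    {k : ℕ} (hk : 1 ≤ k) (h : UniquelyKDimensional G k) : 2 * k + 1 ≤ Fintype.card V := by
  classical
  obtain ⟨⟨B, hB, huniq⟩, hdim⟩ := h
  have hpair := fun b : B => exists_private_pair hG hB huniq b.2
  choose p q hp hq hne heq using hpair
  have hBk : B.card = k := hB.2.trans hdim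
  obtain ⟨b₀, hb₀⟩ : B.Nonempty := Finset.card_pos.1 (by omega)
  let f : Option B → ({x // x ∉ B} → ℚ) :=
    fun i x => i.elim 1 fun b => (G.dist x.1 b.1 : ℚ)
  have hf : LinearIndependent ℚ f := by
    rw [Fintype.linearIndependent_iff]
    intro g hg
    have heval : ∀ x : {x // x ∉ B}, g none + ∑ b : B, g (some b) * (G.dist x.1 b.1 : ℚ) = 0 := by
      intro x
      have := congrFun hg x
      simpa [f, Fintype.sum_option, Finset.sum_apply] using this
    have hsome : ∀ b : B, g (some b) = 0 := by
      intro b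
      have h1 := heval ⟨p b, hp b⟩
      have h2 := heval ⟨q b, hq b⟩
      have h3 : ∑ c : B, g (some c) * ((G.dist (p b) c.1 : ℚ) - G.dist (q b) c.1) = 0 := by
        simp only [mul_sub, Finset.sum_sub_distrib]
        linarith
      rw [Finset.sum_eq_single b] at h3
      · refine (mul_eq_zero.1 h3).resolve_right fun h4 => hne b ?_
        exact_mod_cast sub_eq_zero.1 h4
      · intro c _ hcb
        rw [heq b c.1 c.2 (fun hcb' => hcb (Subtype.ext hcb')), sub_self, mul_zero]
      · simp
    rintro (_ | b)
    · simpa [hsome] using heval ⟨p ⟨b₀, hb₀⟩, hp _⟩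
    · exact hsome b
  have hle := hf.fintype_card_le_finrank
  rw [Module.finrank_fintype_fun_eq_card, Fintype.card_option, Fintype.card_coe,
    Fintype.card_subtype_compl, Fintype.card_coe] at hle
  omega

/-- Every two vertices outside `W` are distinguished by their adjacency to a vertex of `W`. -/
def IsAdjResolving {V : Type*} (S : SimpleGraph V) (W : Finset V) : Prop :=
  ∀ u v : V, u ≠ v → ∃ w ∈ W, w = u ∨ w = v ∨ ¬ (S.Adj u w ↔ S.Adj v w)

instance {V : Type*} [Fintype V] [DecidableEq V] (S : SimpleGraph V) [DecidableRel S.Adj]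
    (W : Finset V) : Decidable (IsAdjResolving S W) := by
  unfold IsAdjResolving
  infer_instance

/-- `B` is the unique smallest adjacency resolving set, it does not dominate `S`, and any two
adjacent vertices have a common non-neighbour. -/
structure IsUniqueNondominating {V : Type*} (S : SimpleGraph V) (B : Finset V) : Prop where
  resolving : IsAdjResolving S B
  eq_of_card_le : ∀ W, W.card ≤ B.card → IsAdjResolving S W → W = B
  exists_undominated : ∃ z, ∀ w ∈ B, w ≠ z ∧ ¬ S.Adj z w
  exists_common : ∀ u v, S.Adj u v → ∃ w, w ≠ u ∧ w ≠ v ∧ ¬ S.Adj u w ∧ ¬ S.Adj v w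

lemma dist_compl {V : Type*} {S : SimpleGraph V}
    (hS : ∀ u v, S.Adj u v → ∃ w, w ≠ u ∧ w ≠ v ∧ ¬ S.Adj u w ∧ ¬ S.Adj v w) {u v : V}
    (huv : S.Adj u v) : Sᶜ.Reachable u v ∧ Sᶜ.dist u v = 2 := by
  obtain ⟨w, hwu, hwv, hu, hv⟩ := hS u v huv
  have h1 : Sᶜ.Adj u w := (compl_adj _ _ _).2 ⟨hwu.symm, hu⟩
  have h2 : Sᶜ.Adj w v := (compl_adj _ _ _).2 ⟨hwv, fun h => hv h.symm⟩
  have hle := dist_le (Walk.cons h1 (Walk.cons h2 Walk.nil))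
  have hr : Sᶜ.Reachable u v := h1.reachable.trans h2.reachable
  have h0 : Sᶜ.dist u v ≠ 0 := fun h => huv.ne (hr.dist_eq_zero_iff.1 h)
  have hne1 : Sᶜ.dist u v ≠ 1 := fun h => by
    rw [dist_eq_one_iff_adj, compl_adj] at h
    exact h.2 huv
  simp only [Walk.length_cons, Walk.length_nil] at hle
  exact ⟨hr, by omega⟩

lemma isResolvingSet_compl_iff {V : Type*} {S : SimpleGraph V}
    (hS : ∀ u v, S.Adj u v → ∃ w, w ≠ u ∧ w ≠ v ∧ ¬ S.Adj u w ∧ ¬ S.Adj v w) (W : Finset V) :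
    IsResolvingSet Sᶜ W ↔ IsAdjResolving S W := by
  classical
  have hd : ∀ u v, Sᶜ.dist u v = if u = v then 0 else if S.Adj u v then 2 else 1 := by
    intro u v
    split_ifs with h1 h2
    · rw [h1, dist_self]
    · exact (dist_compl hS h2).2
    · exact dist_eq_one_iff_adj.2 ((compl_adj _ _ _).2 ⟨h1, h2⟩)
  unfold IsResolvingSet IsAdjResolving
  refine forall₃_congr fun u v huv => exists_congr fun w => and_congr_right fun _ => ?_
  rw [hd, hd]
  by_cases h1 : u = w
  · subst h1
    simp only [if_true, huv.symm, if_false, true_or, iff_true]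
    split_ifs <;> simp
  · by_cases h2 : v = w
    · subst h2
      simp only [if_true, huv, if_false, true_or, or_true, iff_true]
      split_ifs <;> simp
    · by_cases h3 : S.Adj u w <;> by_cases h4 : S.Adj v w <;>
        simp [h1, h2, h3, h4, Ne.symm h1, Ne.symm h2, eq_comm]

lemma IsUniqueNondominating.connected_compl {V : Type*} {S : SimpleGraph V} {B : Finset V}
    (h : IsUniqueNondominating S B) : Sᶜ.Connected := by
  obtain ⟨z, -⟩ := h.exists_undominated
  have : Nonempty V := ⟨z⟩
  refine Connected.mk fun u v => ?_
  by_cases huv : u = v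
  · rw [huv]
  · by_cases hadj : S.Adj u v
    · exact (dist_compl h.exists_common hadj).1
    · exact ((compl_adj _ _ _).2 ⟨huv, hadj⟩ : Sᶜ.Adj u v).reachable

lemma IsUniqueNondominating.uniquelyKDimensional_compl {V : Type*} {S : SimpleGraph V}
    {B : Finset V} (h : IsUniqueNondominating S B) : UniquelyKDimensional Sᶜ B.card := by
  have hres := isResolvingSet_compl_iff h.exists_common
  have hdim : metricDim Sᶜ = B.card := by
    refine le_antisymm (metricDim_le_card ((hres B).2 h.resolving)) ?_
    refine le_csInf ⟨_, B, (hres B).2 h.resolving, rfl⟩ ?_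
    rintro _ ⟨W, hW, rfl⟩
    by_contra hlt
    have := h.eq_of_card_le W (by omega) ((hres W).1 hW)
    exact hlt (this ▸ le_rfl)
  refine ⟨⟨B, ⟨(hres B).2 h.resolving, hdim.symm⟩, ?_⟩, hdim⟩
  rintro W ⟨hW, hcard⟩
  exact h.eq_of_card_le W (hcard.trans hdim).le ((hres W).1 hW)

lemma IsAdjResolving.map {V V' : Type*} {S : SimpleGraph V} {S' : SimpleGraph V'}
    (e : S ≃g S') {W : Finset V} (h : IsAdjResolving S W) :
    IsAdjResolving S' (W.map e.toEquiv.toEmbedding) := by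
  intro u v huv
  obtain ⟨w, hw, hsep⟩ := h (e.symm u) (e.symm v) (e.symm.injective.ne huv)
  refine ⟨e w, Finset.mem_map_of_mem _ hw, ?_⟩
  have hu : S.Adj (e.symm u) w ↔ S'.Adj u (e w) := by
    rw [← e.map_adj_iff, e.apply_symm_apply]
  have hv : S.Adj (e.symm v) w ↔ S'.Adj v (e w) := by
    rw [← e.map_adj_iff, e.apply_symm_apply]
  rw [hu, hv] at hsep
  refine hsep.imp (fun h => ?_) (Or.imp_left fun h => ?_)
  · rw [h, e.apply_symm_apply]
  · rw [h, e.apply_symm_apply]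

lemma IsUniqueNondominating.map {V V' : Type*} {S : SimpleGraph V} {S' : SimpleGraph V'}
    (e : S ≃g S') {B : Finset V} (h : IsUniqueNondominating S B) :
    IsUniqueNondominating S' (B.map e.toEquiv.toEmbedding) where
  resolving := h.resolving.map e
  eq_of_card_le W hW hres := by
    have := h.eq_of_card_le _ (by simpa using hW) (hres.map e.symm)
    rw [← this]
    ext x
    rw [Finset.mem_map_equiv, Finset.mem_map_equiv]
    exact iff_of_eq (congrArg (· ∈ W) (e.apply_symm_apply x).symm)
  exists_undominated := by
    obtain ⟨z, hz⟩ := h.exists_undominated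
    refine ⟨e z, fun w hw => ?_⟩
    obtain ⟨x, hx, rfl⟩ := Finset.mem_map.1 hw
    exact ⟨e.injective.ne (hz x hx).1, fun hadj => (hz x hx).2 (e.map_adj_iff.1 hadj)⟩
  exists_common u v huv := by
    obtain ⟨w, hu, hv, hnu, hnv⟩ := h.exists_common _ _ (e.symm.map_adj_iff.2 huv)
    refine ⟨e w, fun hw => hu (by rw [← hw, e.symm_apply_apply]),
      fun hw => hv (by rw [← hw, e.symm_apply_apply]), ?_, ?_⟩
    · rwa [← e.symm.map_adj_iff, e.symm_apply_apply]
    · rwa [← e.symm.map_adj_iff, e.symm_apply_apply]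

/-- `C` is the unique smallest adjacency resolving set among those that dominate `H`, and no
smaller set is adjacency resolving. -/
structure IsUniqueDominating {V : Type*} (H : SimpleGraph V) (C : Finset V) : Prop where
  resolving : IsAdjResolving H C
  dominating : ∀ y, ∃ w ∈ C, w = y ∨ H.Adj y w
  card_le : ∀ W, IsAdjResolving H W → C.card ≤ W.card
  eq_of_card_le : ∀ W, W.card ≤ C.card → IsAdjResolving H W →
    (∀ y, ∃ w ∈ W, w = y ∨ H.Adj y w) → W = C

lemma IsAdjResolving.toLeft {V V' : Type*} {S : SimpleGraph V} {H : SimpleGraph V'}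
    {W : Finset (V ⊕ V')} (h : IsAdjResolving (S ⊕g H) W) : IsAdjResolving S W.toLeft := by
  intro u v huv
  obtain ⟨w | w, hw, hsep⟩ := h (.inl u) (.inl v) (Sum.inl_injective.ne huv)
  · exact ⟨w, Finset.mem_toLeft.2 hw, by simpa using hsep⟩
  · simp at hsep

lemma IsAdjResolving.toRight {V V' : Type*} {S : SimpleGraph V} {H : SimpleGraph V'}
    {W : Finset (V ⊕ V')} (h : IsAdjResolving (S ⊕g H) W) : IsAdjResolving H W.toRight := by
  intro u v huv
  obtain ⟨w | w, hw, hsep⟩ := h (.inr u) (.inr v) (Sum.inr_injective.ne huv)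
  · simp at hsep
  · exact ⟨w, Finset.mem_toRight.2 hw, by simpa using hsep⟩

lemma IsAdjResolving.disjSum {V V' : Type*} {S : SimpleGraph V} {H : SimpleGraph V'}
    {B : Finset V} {C : Finset V'} (hB : IsAdjResolving S B) (hC : IsAdjResolving H C)
    (hdom : ∀ y, ∃ w ∈ C, w = y ∨ H.Adj y w) : IsAdjResolving (S ⊕g H) (B.disjSum C) := by
  rintro (u | u) (v | v) huv
  · obtain ⟨w, hw, hsep⟩ := hB u v (fun h => huv (h ▸ rfl))
    exact ⟨.inl w, Finset.inl_mem_disjSum.2 hw, by simpa using hsep⟩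
  · obtain ⟨w, hw, hsep⟩ := hdom v
    exact ⟨.inr w, Finset.inr_mem_disjSum.2 hw, by simpa using hsep⟩
  · obtain ⟨w, hw, hsep⟩ := hdom u
    exact ⟨.inr w, Finset.inr_mem_disjSum.2 hw, by simpa using hsep⟩
  · obtain ⟨w, hw, hsep⟩ := hC u v (fun h => huv (h ▸ rfl))
    exact ⟨.inr w, Finset.inr_mem_disjSum.2 hw, by simpa using hsep⟩

lemma IsUniqueNondominating.sum {V V' : Type*} {S : SimpleGraph V} {H : SimpleGraph V'}
    [Nonempty V'] {B : Finset V} {C : Finset V'} (hB : IsUniqueNondominating S B)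
    (hC : IsUniqueDominating H C) : IsUniqueNondominating (S ⊕g H) (B.disjSum C) where
  resolving := hB.resolving.disjSum hC.resolving hC.dominating
  eq_of_card_le W hW hres := by
    have hsum := W.card_toLeft_add_card_toRight
    rw [Finset.card_disjSum] at hW
    have hright := hC.card_le _ hres.toRight
    have hl : W.toLeft = B := hB.eq_of_card_le _ (by omega) hres.toLeft
    have hr : W.toRight = C := by
      refine hC.eq_of_card_le _ (by rw [hl] at hsum; omega) hres.toRight fun y => ?_
      obtain ⟨z, hz⟩ := hB.exists_undominated
      obtain ⟨w | w, hw, hsep⟩ := hres (.inl z) (.inr y) Sum.inl_ne_inr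
      · have := hz w (hl ▸ Finset.mem_toLeft.2 hw)
        simp [this] at hsep
      · exact ⟨w, Finset.mem_toRight.2 hw, by simpa using hsep⟩
    rw [← hl, ← hr, Finset.toLeft_disjSum_toRight]
  exists_undominated := by
    obtain ⟨z, hz⟩ := hB.exists_undominated
    refine ⟨.inl z, ?_⟩
    rintro (w | w) hw
    · simpa using hz w (Finset.inl_mem_disjSum.1 hw)
    · simp
  exists_common := by
    rintro (u | u) (v | v) huv
    · obtain ⟨y⟩ := ‹Nonempty V'›
      exact ⟨.inr y, by simp⟩
    · simp at huv
    · simp at huv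
    · obtain ⟨z, -⟩ := hB.exists_undominated
      exact ⟨.inl z, by simp⟩

/-- The path `4 - 0 - 2 - 1 - 3`. -/
def fivePath : SimpleGraph (Fin 5) :=
  fromRel fun a b => (a, b) ∈ [(0, 2), (0, 4), (1, 2), (1, 3)]

/-- The path `3 - 0 - 4 - 1 - 2` with an isolated vertex `5`. -/
def sixForest : SimpleGraph (Fin 6) :=
  fromRel fun a b => (a, b) ∈ [(0, 3), (0, 4), (1, 2), (1, 4)]

/-- A forest on nine vertices with an isolated vertex `4`. -/
def nineForest : SimpleGraph (Fin 9) :=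
  fromRel fun a b => (a, b) ∈ [(0, 6), (0, 8), (1, 5), (1, 7), (1, 8), (2, 3), (2, 7)]

instance : DecidableRel fivePath.Adj := by
  unfold fivePath
  infer_instance

instance : DecidableRel sixForest.Adj := by
  unfold sixForest
  infer_instance

instance : DecidableRel nineForest.Adj := by
  unfold nineForest
  infer_instance

lemma isUniqueDominating_fivePath : IsUniqueDominating fivePath {0, 1} where
  resolving := by decide +kernel
  dominating := by decide +kernel
  card_le := by decide +kernel
  eq_of_card_le := by decide +kernel

lemma isUniqueNondominating_sixForest : IsUniqueNondominating sixForest {0, 1} where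
  resolving := by decide +kernel
  eq_of_card_le := by decide +kernel
  exists_undominated := by decide +kernel
  exists_common := by decide +kernel

lemma isUniqueNondominating_nineForest : IsUniqueNondominating nineForest {0, 1, 2} where
  resolving := by decide +kernel
  eq_of_card_le := by decide +kernel
  exists_undominated := by decide +kernel
  exists_common := by decide +kernel

lemma exists_isUniqueNondominating (k : ℕ) : ∃ (S : SimpleGraph (Fin ((5 * (k + 2) + 1) / 2 + 1)))
    (B : Finset _), B.card = k + 2 ∧ IsUniqueNondominating S B := by
  induction k using Nat.twoStepInduction with
  | zero => exact ⟨sixForest, {0, 1}, rfl, isUniqueNondominating_sixForest⟩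
  | one => exact ⟨nineForest, {0, 1, 2}, rfl, isUniqueNondominating_nineForest⟩
  | more k ih _ =>
    obtain ⟨S, B, hcard, hB⟩ := ih
    have h := hB.sum isUniqueDominating_fivePath
    let e : Fin ((5 * (k + 2) + 1) / 2 + 1) ⊕ Fin 5 ≃ Fin ((5 * (k + 2 + 2) + 1) / 2 + 1) :=
      finSumFinEquiv.trans (finCongr (by omega))
    refine ⟨_, _, ?_, h.map (Iso.map e (S ⊕g fivePath))⟩
    rw [Finset.card_map, Finset.card_disjSum, hcard]
    rfl

theorem stmt18 (k : ℕ) (hk : 2 ≤ k) :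
    {n : ℕ | ∃ G : SimpleGraph (Fin n), G.Connected ∧
        UniquelyKDimensional G k}.Nonempty ∧
    2 * k + 1 ≤ sInf {n : ℕ | ∃ G : SimpleGraph (Fin n), G.Connected ∧
        UniquelyKDimensional G k} ∧
    sInf {n : ℕ | ∃ G : SimpleGraph (Fin n), G.Connected ∧
        UniquelyKDimensional G k} ≤ (5 * k + 1) / 2 + 1 ∧
    (∀ (V : Type) (inst : Fintype V) (G : SimpleGraph V),
      G.Connected → UniquelyKDimensional G k → 2 * k + 1 ≤ @Fintype.card V inst) := by
  have hmem : (5 * k + 1) / 2 + 1 ∈ {n : ℕ | ∃ G : SimpleGraph (Fin n), G.Connected ∧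
      UniquelyKDimensional G k} := by
    obtain ⟨j, rfl⟩ := Nat.exists_eq_add_of_le' hk
    obtain ⟨S, B, hcard, hB⟩ := exists_isUniqueNondominating j
    have hdim := hB.uniquelyKDimensional_compl
    rw [hcard] at hdim
    exact ⟨Sᶜ, hB.connected_compl, hdim⟩
  refine ⟨⟨_, hmem⟩, le_csInf ⟨_, hmem⟩ ?_, Nat.sInf_le hmem, ?_⟩
  · rintro n ⟨G, hG, h⟩
    simpa using two_mul_add_one_le_card hG (by omega) h
  · intro V _ G hG h
    exact two_mul_add_one_le_card hG (by omega) h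
end

section
/- The minimum order of a uniquely 2-dimensional finite connected simple graph is 6: there exists a uniquely 2-dimensional graph of order 6, and every uniquely 2-dimensional finite connected simple graph has order at least 6. -/
open SimpleGraph

namespace SimpleGraph

variable {V : Type*} {G : SimpleGraph V}

lemma Connected.dist_le_succ_iff (hG : G.Connected) {u v : V} {k : ℕ} :
    G.dist u v ≤ k + 1 ↔ ∃ w, (u = w ∨ G.Adj u w) ∧ G.dist w v ≤ k := by
  constructor
  · intro h
    obtain ⟨p, hp⟩ := hG.exists_walk_length_eq_dist u v
    cases p with
    | nil => exact ⟨u, Or.inl rfl, by simp⟩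
    | @cons _ w _ hadj q =>
      refine ⟨w, Or.inr hadj, (dist_le q).trans ?_⟩
      rw [Walk.length_cons] at hp
      omega
  · rintro ⟨w, rfl | hadj, hw⟩
    · omega
    · have h₁ := hG.dist_triangle (u := u) (v := w) (w := v)
      have h₂ := dist_eq_one_iff_adj.mpr hadj
      omega

lemma Connected.dist_lt_card [Fintype V] (hG : G.Connected) (u v : V) :
    G.dist u v < Fintype.card V := by
  obtain ⟨p, hp, hlen⟩ := hG.exists_path_of_dist u v
  exact hlen ▸ hp.length_lt

end SimpleGraph

section MetricDim

variable {V : Type*} {G : SimpleGraph V}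

lemma IsResolvingSet.mono {W W' : Finset V} (hW : IsResolvingSet G W) (h : W ⊆ W') :
    IsResolvingSet G W' := fun u v huv =>
  let ⟨w, hw, hne⟩ := hW u v huv
  ⟨w, h hw, hne⟩

lemma IsResolvingSet.metricDim_le {W : Finset V} (hW : IsResolvingSet G W) :
    metricDim G ≤ W.card :=
  Nat.sInf_le ⟨W, hW, rfl⟩

end MetricDim

/-- The Boolean test for `dist i j ≤ k` in the graph on `{0, …, n - 1}` with adjacency `A`. -/
def inBall (n : ℕ) (A : ℕ → ℕ → Bool) : ℕ → ℕ → ℕ → Bool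
  | 0, i, j => i == j
  | k + 1, i, j => (List.range n).any fun w => (i == w || A i w) && inBall n A k w j

/-- The Boolean test for `{a, b}` being a resolving set of the graph on `{0, …, n - 1}` with
adjacency `A`. -/
def resolves (n : ℕ) (A : ℕ → ℕ → Bool) (a b : ℕ) : Bool :=
  (List.range n).all fun i => (List.range i).all fun j =>
    (List.range (n - 1)).any fun k =>
      (inBall n A k i a != inBall n A k j a) || (inBall n A k i b != inBall n A k j b)

section Coding

variable {V : Type*} {G : SimpleGraph V} {n : ℕ} {A : ℕ → ℕ → Bool} (f : Fin n ≃ V)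

include f

lemma inBall_iff (hG : G.Connected) (hA : ∀ i j : Fin n, A i j = true ↔ G.Adj (f i) (f j))
    (k : ℕ) (i j : Fin n) : inBall n A k i j = true ↔ G.dist (f i) (f j) ≤ k := by
  induction k generalizing i with
  | zero => simp [inBall, hG.dist_eq_zero_iff, Fin.ext_iff]
  | succ k ih =>
    simp only [inBall, List.any_eq_true, List.mem_range, Bool.and_eq_true, Bool.or_eq_true,
      beq_iff_eq, hG.dist_le_succ_iff]
    constructor
    · rintro ⟨w, hw, h, hball⟩
      refine ⟨f ⟨w, hw⟩, ?_, (ih ⟨w, hw⟩).mp hball⟩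
      exact h.imp (fun h => congrArg f (Fin.ext h)) (hA i ⟨w, hw⟩).mp
    · rintro ⟨w, h, hw⟩
      obtain ⟨w, rfl⟩ := f.surjective w
      refine ⟨w, w.isLt, ?_, (ih w).mpr hw⟩
      exact h.imp (fun h => congrArg Fin.val (f.injective h)) (hA i w).mpr

lemma dist_ne_iff_inBall (hG : G.Connected)
    (hA : ∀ i j : Fin n, A i j = true ↔ G.Adj (f i) (f j)) (i j a : Fin n) :
    G.dist (f i) (f a) ≠ G.dist (f j) (f a) ↔
      ∃ k < n - 1, inBall n A k i a ≠ inBall n A k j a := by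
  let _ : Fintype V := Fintype.ofEquiv _ f
  have hcard : Fintype.card V = n := by simpa using (Fintype.card_congr f).symm
  have hi := hcard ▸ hG.dist_lt_card (f i) (f a)
  have hj := hcard ▸ hG.dist_lt_card (f j) (f a)
  simp only [ne_eq, Bool.eq_iff_iff, inBall_iff f hG hA]
  constructor
  · intro h
    rcases Nat.lt_or_gt_of_ne h with h | h
    · exact ⟨G.dist (f i) (f a), by omega, by omega⟩
    · exact ⟨G.dist (f j) (f a), by omega, by omega⟩
  · rintro ⟨k, -, hk⟩ h
    simp [h] at hk

lemma resolves_iff [DecidableEq V] (hG : G.Connected)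
    (hA : ∀ i j : Fin n, A i j = true ↔ G.Adj (f i) (f j)) (a b : Fin n) :
    resolves n A a b = true ↔ IsResolvingSet G {f a, f b} := by
  have hpair (i j : Fin n) : (∃ w ∈ ({f a, f b} : Finset V), G.dist (f i) w ≠ G.dist (f j) w) ↔
      ∃ k < n - 1, inBall n A k i a ≠ inBall n A k j a ∨ inBall n A k i b ≠ inBall n A k j b := by
    simp only [Finset.mem_insert, Finset.mem_singleton, exists_eq_or_imp, exists_eq_left,
      dist_ne_iff_inBall f hG hA, and_or_left, exists_or]
  simp only [IsResolvingSet, f.surjective.forall, f.injective.ne_iff, hpair, resolves,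
    List.all_eq_true, List.any_eq_true, List.mem_range, Bool.or_eq_true, bne_iff_ne]
  constructor
  · intro h i j hij
    rcases lt_or_gt_of_ne hij with hlt | hlt
    · simpa only [ne_comm] using h j j.isLt i hlt
    · exact h i i.isLt j hlt
  · intro h i hi j hj
    exact h ⟨i, hi⟩ ⟨j, hj.trans hi⟩ (by simpa using hj.ne')

end Coding

/-- The symmetric relation in which `i` and `j` are related iff bit `i` of `rows[j]` or bit `j` of
`rows[i]` is set. -/
def rowAdj (rows : List ℕ) (i j : ℕ) : Bool :=
  (rows.getD j 0).testBit i || (rows.getD i 0).testBit j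

set_option synthInstance.maxSize 2000 in
lemma exists_resolves_ne_zero_one {n : ℕ} (hn : n < 6) (h2 : 2 ≤ n) :
    ∀ r₁ < 2, ∀ r₂ < (if 2 < n then 4 else 1), ∀ r₃ < (if 3 < n then 8 else 1),
      ∀ r₄ < (if 4 < n then 16 else 1), resolves n (rowAdj [0, r₁, r₂, r₃, r₄]) 0 1 = true →
        ∃ p ∈ [(0, 2), (1, 2), (0, 3), (1, 3), (2, 3), (0, 4), (0, 0)],
          (p.1 < n ∧ p.2 < n) ∧ resolves n (rowAdj [0, r₁, r₂, r₃, r₄]) p.1 p.2 = true := by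
  interval_cases n <;> decide +kernel

lemma exists_rowAdj {n : ℕ} (hn : n < 6) (H : SimpleGraph (Fin n)) :
    ∃ r₁ < 2, ∃ r₂ < (if 2 < n then 4 else 1), ∃ r₃ < (if 3 < n then 8 else 1),
      ∃ r₄ < (if 4 < n then 16 else 1),
        ∀ i j : Fin n, rowAdj [0, r₁, r₂, r₃, r₄] i j = true ↔ H.Adj i j := by
  classical
  let P : ℕ → ℕ → Bool := fun i j => decide (∃ (hi : i < n) (hj : j < n), H.Adj ⟨i, hi⟩ ⟨j, hj⟩)
  let r : ℕ → ℕ := fun j => if j < n then Nat.ofBits fun i : Fin j => P i j else 0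
  have hr (j : ℕ) : r j < if j < n then 2 ^ j else 1 := by
    by_cases hj : j < n
    · simpa only [r, if_pos hj] using Nat.ofBits_lt_two_pow _
    · simp [r, hj]
  refine ⟨r 1, (hr 1).trans_le (by split <;> simp), r 2, hr 2, r 3, hr 3, r 4, hr 4, fun i j => ?_⟩
  have hrow (i j : Fin n) : ([0, r 1, r 2, r 3, r 4].getD j 0).testBit i =
      (decide (i < j) && P i j) := by
    have : [0, r 1, r 2, r 3, r 4].getD j 0 = r j := by
      obtain ⟨j, hj⟩ := j
      have : j < 5 := by omega
      interval_cases j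
      · simp [r, Nat.ofBits]
      all_goals rfl
    rw [this]
    simp only [r, if_pos j.isLt]
    by_cases hij : i < j
    · simp [hij]
    · simpa [hij] using Nat.testBit_ofBits_ge (fun i : Fin j => P i j) i (not_lt.mp hij)
  rw [rowAdj, hrow, hrow]
  rcases lt_trichotomy i j with hij | rfl | hij
  · simp [P, hij, hij.not_gt]
  · simp
  · simp [P, hij, hij.not_gt, H.adj_comm]

lemma exists_equiv_zero_one {V : Type*} [Fintype V] {n : ℕ} (hn : Fintype.card V = n) {a b : V}
    (hab : a ≠ b) (h₀ : 0 < n) (h₁ : 1 < n) :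
    ∃ f : Fin n ≃ V, f ⟨0, h₀⟩ = a ∧ f ⟨1, h₁⟩ = b := by
  classical
  let e := (Fintype.equivFinOfCardEq hn).symm
  let e' := e.trans (Equiv.swap (e ⟨0, h₀⟩) a)
  have h₀' : e' ⟨0, h₀⟩ = a := by simp [e']
  refine ⟨e'.trans (Equiv.swap (e' ⟨1, h₁⟩) b), ?_, by simp⟩
  rw [Equiv.trans_apply, h₀', Equiv.swap_apply_of_ne_of_ne _ hab]
  rw [← h₀', e'.injective.ne_iff]
  simp

theorem UniquelyKDimensional.six_le_card {V : Type*} [Fintype V] {G : SimpleGraph V}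
    (hG : G.Connected) (h : UniquelyKDimensional G 2) : 6 ≤ Fintype.card V := by
  classical
  by_contra! hlt
  obtain ⟨⟨B, ⟨hres, hcard⟩, huniq⟩, hdim⟩ := h
  obtain ⟨x, y, hxy, rfl⟩ := Finset.card_eq_two.mp (hcard.trans hdim)
  obtain ⟨n, hn⟩ : ∃ n, Fintype.card V = n := ⟨_, rfl⟩
  have h2 : 2 ≤ n := by
    rw [← hn, ← Finset.card_pair hxy]
    exact Finset.card_le_univ _
  obtain ⟨f, hf₀, hf₁⟩ := exists_equiv_zero_one hn hxy (by omega) h2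
  rw [← hf₀, ← hf₁] at hres huniq
  obtain ⟨r₁, h₁, r₂, h₂, r₃, h₃, r₄, h₄, hA⟩ := exists_rowAdj (by omega) (G.comap f)
  obtain ⟨⟨a, b⟩, hp, ⟨ha, hb⟩, hres'⟩ := exists_resolves_ne_zero_one (by omega) h2 r₁ h₁ r₂ h₂
    r₃ h₃ r₄ h₄ ((resolves_iff f hG hA ⟨0, by omega⟩ ⟨1, h2⟩).mpr hres)
  have hW := (resolves_iff f hG hA ⟨a, ha⟩ ⟨b, hb⟩).mp hres'
  have heq := huniq _ ⟨hW, le_antisymm (Finset.card_le_two.trans hdim.ge) hW.metricDim_le⟩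
  have h0 : f ⟨0, by omega⟩ ∈ ({f ⟨a, ha⟩, f ⟨b, hb⟩} : Finset V) := by simp [heq]
  have h1 : f ⟨1, h2⟩ ∈ ({f ⟨a, ha⟩, f ⟨b, hb⟩} : Finset V) := by simp [heq]
  simp only [Finset.mem_insert, Finset.mem_singleton, f.injective.eq_iff, Fin.mk.injEq] at h0 h1
  simp only [List.mem_cons, List.not_mem_nil, Prod.mk.injEq, or_false] at hp
  omega

/-- The rows of the graph on six vertices with edges
`01, 02, 13, 23, 04, 14, 24, 34, 25, 35`, in the format of `rowAdj`. -/
def sixRows : List ℕ := [0, 1, 1, 6, 15, 12]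

/-- A graph of order six whose only metric basis is `{0, 1}`. -/
def sixGraph : SimpleGraph (Fin 6) where
  Adj i j := rowAdj sixRows i j = true
  symm := ⟨by decide⟩
  loopless := ⟨by decide⟩

lemma sixGraph_connected : sixGraph.Connected := by
  have h (i : Fin 6) (hi : rowAdj sixRows 4 i = true) : sixGraph.Reachable 4 i :=
    SimpleGraph.Adj.reachable (show sixGraph.Adj 4 i from hi)
  rw [SimpleGraph.connected_iff_exists_forall_reachable]
  refine ⟨4, fun i => ?_⟩
  fin_cases i
  · exact h 0 rfl
  · exact h 1 rfl
  · exact h 2 rfl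
  · exact h 3 rfl
  · exact SimpleGraph.Reachable.refl _
  · exact (h 2 rfl).trans (SimpleGraph.Adj.reachable (show sixGraph.Adj 2 5 from rfl))

lemma sixGraph_isResolvingSet_pair_iff (a b : Fin 6) :
    IsResolvingSet sixGraph {a, b} ↔ a = 0 ∧ b = 1 ∨ a = 1 ∧ b = 0 := by
  refine (resolves_iff (A := rowAdj sixRows) (Equiv.refl _) sixGraph_connected
    (fun _ _ => Iff.rfl) a b).symm.trans ?_
  revert a b
  decide +kernel

lemma eq_of_sixGraph_isResolvingSet {W : Finset (Fin 6)} (hW : IsResolvingSet sixGraph W)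
    (hcard : W.card ≤ 2) : W = {0, 1} := by
  obtain ⟨a, b, hab⟩ : ∃ a b, W ⊆ {a, b} := by
    obtain ⟨W', hsub, hW'⟩ := Finset.exists_superset_card_eq hcard (by simp)
    obtain ⟨a, b, -, rfl⟩ := Finset.card_eq_two.mp hW'
    exact ⟨a, b, hsub⟩
  have hsingle (c : Fin 6) : ¬ W ⊆ {c} := fun h => by
    have := (sixGraph_isResolvingSet_pair_iff c c).mp (hW.mono (by simpa using h))
    omega
  have hpair : W ⊆ {0, 1} := by
    rcases (sixGraph_isResolvingSet_pair_iff a b).mp (hW.mono hab) with ⟨rfl, rfl⟩ | ⟨rfl, rfl⟩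
    · exact hab
    · rwa [Finset.pair_comm]
  have h0 : 0 ∈ W := by
    by_contra h
    exact hsingle 1 ((Finset.subset_insert_iff_of_notMem h).mp hpair)
  have h1 : 1 ∈ W := by
    by_contra h
    rw [Finset.pair_comm] at hpair
    exact hsingle 0 ((Finset.subset_insert_iff_of_notMem h).mp hpair)
  exact hpair.antisymm (by simp [Finset.insert_subset_iff, h0, h1])

lemma uniquelyKDimensional_sixGraph : UniquelyKDimensional sixGraph 2 := by
  have hres : IsResolvingSet sixGraph {0, 1} :=
    (sixGraph_isResolvingSet_pair_iff 0 1).mpr (Or.inl ⟨rfl, rfl⟩)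
  have hle : metricDim sixGraph ≤ 2 := hres.metricDim_le
  have hdim : metricDim sixGraph = 2 := by
    obtain ⟨W, hW, hcard⟩ : metricDim sixGraph ∈
        {k | ∃ W : Finset (Fin 6), IsResolvingSet sixGraph W ∧ W.card = k} :=
      Nat.sInf_mem ⟨2, {0, 1}, hres, rfl⟩
    rw [← hcard, eq_of_sixGraph_isResolvingSet hW (hcard ▸ hle)]
    rfl
  exact ⟨⟨{0, 1}, ⟨hres, hdim.symm⟩, fun W hW =>
    eq_of_sixGraph_isResolvingSet hW.1 (hW.2.trans hdim).le⟩, hdim⟩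

theorem stmt19 :
    (∃ G : SimpleGraph (Fin 6), G.Connected ∧ UniquelyKDimensional G 2) ∧
    (∀ (V : Type) (inst : Fintype V) (G : SimpleGraph V),
      G.Connected → UniquelyKDimensional G 2 → 6 ≤ @Fintype.card V inst) := by
  exact ⟨⟨sixGraph, sixGraph_connected, uniquelyKDimensional_sixGraph⟩,
    fun _ _ _ hG h => h.six_le_card hG⟩
end
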